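/- Fix r_1 < ... < r_k and n > r_k² with M_n primitive and minimally generated. If ρ is a minimal presentation of M_n, then Φ_n(ρ) is a minimal presentation of M_{n+r_k}, and Φ_n induces a bijection between the set of minimal presentations of M_n and the set of minimal presentations of M_{n+r_k}. -/

import Mathlib

open Finset

/-- Length of a factorization. -/
def vlen {m : ℕ} (z : Fin m → ℕ) : ℕ := ∑ i, z i

/-- Factorization homomorphism of `M_n = ⟨n, n+r_1, ..., n+r_k⟩`. -/
def piM (k n : ℕ) (r : Fin (k + 1) → ℕ) (z : Fin (k + 2) → ℕ) : ℕ :=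
  z 0 * n + ∑ i : Fin (k + 1), z i.succ * (n + r i)

/-- Two factorizations of `β` lie in the same connected component of the factorization
graph `∇_β`: there is a path of factorizations of `β`, consecutive ones sharing a
common positive coordinate. -/
def SameComp {m : ℕ} (π : (Fin m → ℕ) → ℕ) (β : ℕ) :
    (Fin m → ℕ) → (Fin m → ℕ) → Prop :=
  Relation.ReflTransGen (fun a b => π a = β ∧ π b = β ∧ ∃ i, 0 < a i ∧ 0 < b i)

/-- `β` is a Betti element: its factorization graph is disconnected. -/
def IsBetti {m : ℕ} (π : (Fin m → ℕ) → ℕ) (β : ℕ) : Prop :=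
  ∃ z z', π z = β ∧ π z' = β ∧ ¬ SameComp π β z z'

/-- The map `Φ_n` on pairs of factorizations. -/
def Phi (k : ℕ) (p : (Fin (k + 2) → ℕ) × (Fin (k + 2) → ℕ)) :
    (Fin (k + 2) → ℕ) × (Fin (k + 2) → ℕ) :=
  if vlen p.2 < vlen p.1 then
    (p.1 + (vlen p.1 - vlen p.2) • Pi.single (0 : Fin (k + 2)) 1,
     p.2 + (vlen p.1 - vlen p.2) • Pi.single (Fin.last (k + 1)) 1)
  else if vlen p.1 < vlen p.2 then
    (p.1 + (vlen p.2 - vlen p.1) • Pi.single (Fin.last (k + 1)) 1,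
     p.2 + (vlen p.2 - vlen p.1) • Pi.single (0 : Fin (k + 2)) 1)
  else p

/-- The congruence generated by a set of relations `ρ`. -/
inductive CongGen {m : ℕ} (ρ : Set ((Fin m → ℕ) × (Fin m → ℕ))) :
    (Fin m → ℕ) → (Fin m → ℕ) → Prop
  | of {z z'} : (z, z') ∈ ρ → CongGen ρ z z'
  | refl (z) : CongGen ρ z z
  | symm {z z'} : CongGen ρ z z' → CongGen ρ z' z
  | trans {x y z} : CongGen ρ x y → CongGen ρ y z → CongGen ρ x z
  | add {z z'} (u) : CongGen ρ z z' → CongGen ρ (z + u) (z' + u)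

/-- `ρ` is a presentation for the monoid with factorization homomorphism `π`. -/
def IsPres {m : ℕ} (π : (Fin m → ℕ) → ℕ)
    (ρ : Set ((Fin m → ℕ) × (Fin m → ℕ))) : Prop :=
  (∀ p ∈ ρ, π p.1 = π p.2) ∧ ∀ z z', CongGen ρ z z' ↔ π z = π z'

/-- `ρ` is a minimal presentation. -/
def IsMinPres {m : ℕ} (π : (Fin m → ℕ) → ℕ)
    (ρ : Set ((Fin m → ℕ) × (Fin m → ℕ))) : Prop :=
  IsPres π ρ ∧ ∀ ρ' ⊆ ρ, IsPres π ρ' → ρ' = ρ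

/-- Primitivity of `M_n`: the gcd of the generators is 1. -/
def Primitive (k n : ℕ) (r : Fin (k + 1) → ℕ) : Prop :=
  Nat.gcd n (Finset.univ.gcd fun i : Fin (k + 1) => n + r i) = 1

/-- Distance between two factorizations. -/
def fdist {m : ℕ} (z z' : Fin m → ℕ) : ℕ :=
  max (∑ i, (z i - min (z i) (z' i))) (∑ i, (z' i - min (z i) (z' i)))

/-!
Write `π_n(z) = n |z| + w(z)`, where `w(z) = ∑ zᵢ rᵢ`. Among any `r_k` middle atoms of a
factorization, the pigeonhole principle modulo `r_k` finds a subfactorization that can be traded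
for copies of `e₀` and `e_k` without changing `|z|` or `w(z)`. So a factorization may be assumed to
have fewer than `r_k` middle atoms, and for `n > r_k²` it then contains `l` copies of `e_k`
(respectively `e₀`) as soon as its fiber has a factorization longer (respectively shorter) by `l`.

Consequently a set of relations presents `M_n` exactly when its homogeneous part presents the
homogenized monoid, which does not depend on `n`, and it contains, up to `(|z|, w(z))`, every gap:
a pair of factorizations of consecutive lengths in one fiber that cannot be joined by shared atoms.
Padding with `e₀` and `e_k` matches the gaps of `M_n` with those of `M_{n + r_k}`, and every
inhomogeneous relation of a minimal presentation is a gap, hence in the image of `Φ_n`.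
-/

section Length

variable {m : ℕ}

lemma vlen_add (x y : Fin m → ℕ) : vlen (x + y) = vlen x + vlen y :=
  Finset.sum_add_distrib

lemma vlen_single (i : Fin m) (c : ℕ) : vlen (Pi.single i c) = c := by
  simp [vlen]

lemma vlen_eq_zero {z : Fin m → ℕ} : vlen z = 0 ↔ z = 0 := by
  simp [vlen, funext_iff]

lemma exists_pos_of_vlen_pos {z : Fin m → ℕ} (hz : 0 < vlen z) : ∃ i, 0 < z i := by
  obtain ⟨i, -, hi⟩ := Finset.exists_ne_zero_of_sum_ne_zero hz.ne'
  exact ⟨i, Nat.pos_of_ne_zero hi⟩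

lemma exists_eq_add_single {z : Fin m → ℕ} {i : Fin m} (hi : 0 < z i) :
    ∃ y : Fin m → ℕ, z = y + Pi.single i 1 := by
  have hle : Pi.single i 1 ≤ z := update_le_iff.2 ⟨hi, fun j _ => Nat.zero_le _⟩
  exact ⟨_, (tsub_add_cancel_of_le hle).symm⟩

lemma exists_list_count_eq (x : Fin m → ℕ) : ∃ l : List (Fin m), ∀ i, l.count i = x i := by
  refine ⟨(Finsupp.toMultiset (Finsupp.equivFunOnFinite.symm x)).toList, fun i => ?_⟩
  rw [← Multiset.coe_count, Multiset.coe_toList, Finsupp.count_toMultiset]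
  rfl

lemma exists_monotone_vlen_eq (x : Fin m → ℕ) :
    ∃ f : ℕ → Fin m → ℕ, Monotone f ∧ ∀ j ≤ vlen x, f j ≤ x ∧ vlen (f j) = j := by
  obtain ⟨l, hl⟩ := exists_list_count_eq x
  have vlen_count (l' : List (Fin m)) : vlen (fun i => l'.count i) = l'.length := by
    simpa only [Multiset.coe_count, Multiset.coe_card, vlen] using
      Multiset.sum_count_eq_card (m := (l' : Multiset (Fin m))) fun i _ => Finset.mem_univ i
  have hlen : vlen x = l.length := by rw [← vlen_count, ← funext hl]
  refine ⟨fun j i => (l.take j).count i, fun a b hab i => ?_, fun j hj => ⟨fun i => ?_, ?_⟩⟩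
  · exact (List.take_sublist_take_left hab).count_le i
  · exact hl i ▸ (List.take_sublist j l).count_le i
  · rw [vlen_count, List.length_take, min_eq_left (hlen ▸ hj)]

-- Two of the `N + 1` partial sums along a chain in `[0, x]` agree modulo `N`.
lemma exists_le_dvd_dotProduct {N : ℕ} (hN : 0 < N) (w : Fin m → ℕ) {x : Fin m → ℕ}
    (hx : N ≤ vlen x) : ∃ u ≤ x, 0 < vlen u ∧ vlen u ≤ N ∧ N ∣ u ⬝ᵥ w := by
  obtain ⟨f, hf_mono, hf⟩ := exists_monotone_vlen_eq x
  obtain ⟨a, ha, b, hb, hab, hmod⟩ : ∃ a ∈ range (N + 1), ∃ b ∈ range (N + 1), a ≠ b ∧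
      (f a ⬝ᵥ w) % N = (f b ⬝ᵥ w) % N :=
    Finset.exists_ne_map_eq_of_card_lt_of_maps_to (t := range N) (by simp)
      fun a _ => by simpa using Nat.mod_lt _ hN
  wlog hlt : a < b generalizing a b
  · exact this b hb a ha hab.symm hmod.symm (by omega)
  rw [Finset.mem_range] at ha hb
  obtain ⟨u, hu⟩ := exists_add_of_le (hf_mono hlt.le)
  obtain ⟨hbx, hb_len⟩ := hf b (by omega)
  obtain ⟨-, ha_len⟩ := hf a (by omega)
  rw [hu, vlen_add] at hb_len
  rw [hu, add_dotProduct] at hmod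
  have hzero : 0 ≡ u ⬝ᵥ w [MOD N] := Nat.ModEq.add_left_cancel' _ hmod
  exact ⟨u, (hu ▸ le_add_self).trans hbx, by omega, by omega,
    Nat.modEq_zero_iff_dvd.1 hzero.symm⟩

/-- Two factorizations meet if they share an atom, that is, are adjacent in the
factorization graph of their common value. -/
def Meets (x y : Fin m → ℕ) : Prop := ∃ i, 0 < x i ∧ 0 < y i

lemma Meets.exists_eq_add_single {x y : Fin m → ℕ} (h : Meets x y) :
    ∃ (x' y' : Fin m → ℕ) (i : Fin m), x = x' + Pi.single i 1 ∧ y = y' + Pi.single i 1 := by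
  obtain ⟨i, hx, hy⟩ := h
  obtain ⟨x', hx'⟩ := _root_.exists_eq_add_single hx
  obtain ⟨y', hy'⟩ := _root_.exists_eq_add_single hy
  exact ⟨x', y', i, hx', hy'⟩

lemma meets_add_right (x y : Fin m → ℕ) {u : Fin m → ℕ} (hu : u ≠ 0) :
    Meets (x + u) (y + u) := by
  obtain ⟨i, hi⟩ := exists_pos_of_vlen_pos (Nat.pos_of_ne_zero (mt vlen_eq_zero.1 hu))
  exact ⟨i, Nat.add_pos_right _ hi, Nat.add_pos_right _ hi⟩

lemma Meets.add {x y : Fin m → ℕ} (h : Meets x y) (u v : Fin m → ℕ) :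
    Meets (x + u) (y + v) :=
  h.imp fun _ hi => ⟨Nat.add_pos_left hi.1 _, Nat.add_pos_left hi.2 _⟩

end Length

section Weight

variable {k : ℕ}

/-- The weight `∑ zᵢ rᵢ` of a factorization, with the convention `r₀ = 0`; thus
`π_n(z) = n |z| + weight z`. -/
def weight (r : Fin (k + 1) → ℕ) (z : Fin (k + 2) → ℕ) : ℕ :=
  z ⬝ᵥ (Fin.cons 0 r : Fin (k + 2) → ℕ)

/-- The value of a factorization in the homogenized monoid `⟨(1, 0), (1, r₁), …, (1, r_k)⟩`.
Two factorizations of equal bidegree have equal values under every `π_n`. -/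
def bideg (r : Fin (k + 1) → ℕ) (z : Fin (k + 2) → ℕ) : ℕ × ℕ := (vlen z, weight r z)

/-- The factorization `s e₀ + t e_k` supported on the smallest and the largest generator. -/
def pad (k s t : ℕ) : Fin (k + 2) → ℕ := Pi.single 0 s + Pi.single (Fin.last (k + 1)) t

/-- The part of a factorization supported away from the smallest and the largest generator. -/
def middle (z : Fin (k + 2) → ℕ) : Fin (k + 2) → ℕ := z - pad k (z 0) (z (Fin.last (k + 1)))

variable {n : ℕ} {r : Fin (k + 1) → ℕ}

lemma weight_add (r : Fin (k + 1) → ℕ) (x y : Fin (k + 2) → ℕ) :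
    weight r (x + y) = weight r x + weight r y :=
  add_dotProduct ..

lemma piM_eq (n : ℕ) (r : Fin (k + 1) → ℕ) (z : Fin (k + 2) → ℕ) :
    piM k n r z = n * vlen z + weight r z := by
  simp only [piM, vlen, weight, dotProduct, Fin.sum_univ_succ (n := k + 1), Fin.cons_zero,
    Fin.cons_succ, mul_add, Finset.sum_add_distrib, ← Finset.sum_mul]
  ring

lemma piM_add (n : ℕ) (r : Fin (k + 1) → ℕ) (x y : Fin (k + 2) → ℕ) :
    piM k n r (x + y) = piM k n r x + piM k n r y := by
  simp only [piM_eq, vlen_add, weight_add]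
  ring

lemma piM_lt_piM_add_single (hn : 0 < n) (x : Fin (k + 2) → ℕ) (i : Fin (k + 2)) :
    piM k n r x < piM k n r (x + Pi.single i 1) := by
  rw [piM_add, piM_eq n r (Pi.single i 1), vlen_single]
  omega

lemma bideg_eq_iff {x y : Fin (k + 2) → ℕ} :
    bideg r x = bideg r y ↔ vlen x = vlen y ∧ weight r x = weight r y :=
  Prod.mk_inj

lemma bideg_add_right {x y : Fin (k + 2) → ℕ} (u : Fin (k + 2) → ℕ) :
    bideg r (x + u) = bideg r (y + u) ↔ bideg r x = bideg r y := by
  simp only [bideg_eq_iff, vlen_add, weight_add, add_left_inj]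

lemma piM_eq_of_bideg_eq (n : ℕ) {x y : Fin (k + 2) → ℕ} (h : bideg r x = bideg r y) :
    piM k n r x = piM k n r y := by
  rw [bideg_eq_iff] at h
  rw [piM_eq, piM_eq, h.1, h.2]

lemma piM_eq_iff_of_vlen_eq_add {x y : Fin (k + 2) → ℕ} {l : ℕ} (h : vlen x = vlen y + l) :
    piM k n r x = piM k n r y ↔ weight r y = weight r x + n * l := by
  rw [piM_eq, piM_eq, h, mul_add]
  omega

lemma bideg_eq_of_piM_eq {x y : Fin (k + 2) → ℕ} (h : piM k n r x = piM k n r y)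
    (hlen : vlen x = vlen y) : bideg r x = bideg r y :=
  bideg_eq_iff.2 ⟨hlen, ((piM_eq_iff_of_vlen_eq_add (l := 0) hlen).1 h).symm⟩

lemma vlen_pad (k s t : ℕ) : vlen (pad k s t) = s + t := by
  rw [pad, vlen_add, vlen_single, vlen_single]

lemma weight_pad (r : Fin (k + 1) → ℕ) (s t : ℕ) :
    weight r (pad k s t) = t * r (Fin.last k) := by
  rw [weight, pad, add_dotProduct, single_dotProduct, single_dotProduct, ← Fin.succ_last,
    Fin.cons_zero, Fin.cons_succ, mul_zero, zero_add]

lemma pad_apply_zero (k s t : ℕ) : pad k s t 0 = s := by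
  simp [pad, Fin.last_pos.ne]

lemma pad_apply_last (k s t : ℕ) : pad k s t (Fin.last (k + 1)) = t := by
  simp [pad, Fin.last_pos.ne']

lemma pad_le_iff {s t : ℕ} {z : Fin (k + 2) → ℕ} :
    pad k s t ≤ z ↔ s ≤ z 0 ∧ t ≤ z (Fin.last (k + 1)) := by
  refine ⟨fun h => ⟨?_, ?_⟩, fun h i => ?_⟩
  · simpa only [pad_apply_zero] using h 0
  · simpa only [pad_apply_last] using h (Fin.last (k + 1))
  · obtain rfl | hi := eq_or_ne i 0
    · simpa only [pad_apply_zero] using h.1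
    obtain rfl | hi' := eq_or_ne i (Fin.last (k + 1))
    · simpa only [pad_apply_last] using h.2
    · simp [pad, hi, hi']

lemma middle_add_pad (z : Fin (k + 2) → ℕ) :
    middle z + pad k (z 0) (z (Fin.last (k + 1))) = z :=
  tsub_add_cancel_of_le (pad_le_iff.2 ⟨le_rfl, le_rfl⟩)

lemma middle_apply_zero (z : Fin (k + 2) → ℕ) : middle z 0 = 0 := by
  simp [middle, pad_apply_zero]

lemma middle_apply_last (z : Fin (k + 2) → ℕ) : middle z (Fin.last (k + 1)) = 0 := by
  simp [middle, pad_apply_last]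

lemma vlen_eq_vlen_middle_add (z : Fin (k + 2) → ℕ) :
    vlen z = vlen (middle z) + (z 0 + z (Fin.last (k + 1))) := by
  conv_lhs => rw [← middle_add_pad z, vlen_add, vlen_pad]

lemma weight_eq_weight_middle_add (r : Fin (k + 1) → ℕ) (z : Fin (k + 2) → ℕ) :
    weight r z = weight r (middle z) + z (Fin.last (k + 1)) * r (Fin.last k) := by
  conv_lhs => rw [← middle_add_pad z, weight_add, weight_pad]

lemma vlen_le_weight (hpos : ∀ i, 0 < r i) {u : Fin (k + 2) → ℕ} (hu : u 0 = 0) :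
    vlen u ≤ weight r u := by
  refine Finset.sum_le_sum fun i _ => ?_
  induction i using Fin.cases with
  | zero => simp [hu]
  | succ i => simpa only [Fin.cons_succ] using Nat.le_mul_of_pos_right _ (hpos i)

lemma cons_zero_lt_last (hpos : ∀ i, 0 < r i) (hlt : ∀ i, i ≠ Fin.last k → r i < r (Fin.last k))
    {i : Fin (k + 2)} (hi : i ≠ Fin.last (k + 1)) :
    (Fin.cons 0 r : Fin (k + 2) → ℕ) i < r (Fin.last k) := by
  induction i using Fin.cases with
  | zero => exact hpos _
  | succ i => exact hlt i fun h => hi (h ▸ Fin.succ_last k)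

lemma weight_add_vlen_le (hpos : ∀ i, 0 < r i)
    (hlt : ∀ i, i ≠ Fin.last k → r i < r (Fin.last k)) {u : Fin (k + 2) → ℕ}
    (hu : u (Fin.last (k + 1)) = 0) : weight r u + vlen u ≤ r (Fin.last k) * vlen u := by
  rw [weight, dotProduct, vlen, ← Finset.sum_add_distrib, Finset.mul_sum]
  refine Finset.sum_le_sum fun i _ => ?_
  obtain rfl | hi := eq_or_ne i (Fin.last (k + 1))
  · simp [hu]
  · rw [← Nat.mul_succ, mul_comm]
    exact Nat.mul_le_mul_right _ (cons_zero_lt_last hpos hlt hi)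

lemma weight_le (hpos : ∀ i, 0 < r i) (hlt : ∀ i, i ≠ Fin.last k → r i < r (Fin.last k))
    (z : Fin (k + 2) → ℕ) : weight r z ≤ r (Fin.last k) * vlen z := by
  have h := weight_add_vlen_le hpos hlt (middle_apply_last z)
  rw [weight_eq_weight_middle_add, vlen_eq_vlen_middle_add]
  nlinarith

end Weight

section Reduction

variable {k n : ℕ} {r : Fin (k + 1) → ℕ}

lemma exists_le_middle_weight_eq (hpos : ∀ i, 0 < r i)
    (hlt : ∀ i, i ≠ Fin.last k → r i < r (Fin.last k)) {z : Fin (k + 2) → ℕ}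
    (hz : r (Fin.last k) ≤ vlen (middle z)) :
    ∃ u ≤ middle z, ∃ s t, 0 < s ∧ 0 < t ∧ vlen u = s + t ∧ vlen u ≤ r (Fin.last k) ∧
      weight r u = t * r (Fin.last k) := by
  obtain ⟨u, hu, hu_pos, hu_le, t, ht⟩ :=
    exists_le_dvd_dotProduct (hpos _) (Fin.cons 0 r) hz
  change weight r u = _ at ht
  have hlower : vlen u ≤ weight r u :=
    vlen_le_weight hpos (Nat.le_zero.1 (middle_apply_zero z ▸ hu 0))
  have hupper : weight r u + vlen u ≤ r (Fin.last k) * vlen u :=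
    weight_add_vlen_le hpos hlt (Nat.le_zero.1 (middle_apply_last z ▸ hu (Fin.last (k + 1))))
  rw [ht] at hlower hupper
  have ht_pos : 0 < t := Nat.pos_of_mul_pos_left (hu_pos.trans_le hlower)
  have ht_lt : t < vlen u := Nat.lt_of_mul_lt_mul_left (a := r (Fin.last k)) (by omega)
  exact ⟨u, hu, vlen u - t, t, by omega, ht_pos, by omega, hu_le, by rw [ht, mul_comm]⟩

-- Trade a subfactorization of length `s + t` and weight `t r_k` for `s e₀ + t e_k`.
lemma exists_bideg_eq_vlen_middle_lt (hpos : ∀ i, 0 < r i)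
    (hlt : ∀ i, i ≠ Fin.last k → r i < r (Fin.last k)) {z : Fin (k + 2) → ℕ}
    (hz : r (Fin.last k) ≤ vlen (middle z)) :
    ∃ y, bideg r y = bideg r z ∧ vlen (middle y) < vlen (middle z) ∧ 0 < y 0 ∧
      0 < y (Fin.last (k + 1)) ∧ (r (Fin.last k) < vlen z → Meets z y) := by
  obtain ⟨u, hu, s, t, hs, ht, hlen, hle, hweight⟩ := exists_le_middle_weight_eq hpos hlt hz
  obtain ⟨v, rfl⟩ := exists_add_of_le (hu.trans tsub_le_self)
  have hu₀ : u 0 = 0 := Nat.le_zero.1 (middle_apply_zero (u + v) ▸ hu 0)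
  have hu₁ : u (Fin.last (k + 1)) = 0 :=
    Nat.le_zero.1 (middle_apply_last (u + v) ▸ hu (Fin.last (k + 1)))
  have hbideg : bideg r (pad k s t + v) = bideg r (u + v) := by
    rw [bideg_add_right, bideg_eq_iff, vlen_pad, weight_pad]
    exact ⟨hlen.symm, hweight.symm⟩
  have hy₀ : (pad k s t + v) 0 = s + v 0 := by rw [Pi.add_apply, pad_apply_zero]
  have hy₁ : (pad k s t + v) (Fin.last (k + 1)) = t + v (Fin.last (k + 1)) := by
    rw [Pi.add_apply, pad_apply_last]
  refine ⟨pad k s t + v, hbideg, ?_, by omega, by omega, fun hz => meets_add_right _ _ ?_⟩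
  · have h := vlen_eq_vlen_middle_add (pad k s t + v)
    rw [(bideg_eq_iff.1 hbideg).1, vlen_eq_vlen_middle_add (u + v), hy₀, hy₁, Pi.add_apply,
      Pi.add_apply, hu₀, hu₁] at h
    omega
  · rintro rfl
    rw [add_zero] at hz
    omega

lemma exists_bideg_eq_vlen_middle_lt_last (hpos : ∀ i, 0 < r i)
    (hlt : ∀ i, i ≠ Fin.last k → r i < r (Fin.last k)) (z : Fin (k + 2) → ℕ) :
    ∃ y, bideg r y = bideg r z ∧ vlen (middle y) < r (Fin.last k) := by
  induction hN : vlen (middle z) using Nat.strong_induction_on generalizing z with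
  | _ N ih =>
    obtain hz | hz := lt_or_ge (vlen (middle z)) (r (Fin.last k))
    · exact ⟨z, rfl, hz⟩
    · obtain ⟨y, hy, hdec, -⟩ := exists_bideg_eq_vlen_middle_lt hpos hlt hz
      obtain ⟨x, hx, hx'⟩ := ih _ (hN ▸ hdec) y rfl
      exact ⟨x, hx.trans hy, hx'⟩

lemma le_of_mul_le_mul_add_sq {R t x : ℕ} (hn : R ^ 2 < n) (h : n * t ≤ R * x + R ^ 2) :
    t ≤ x := by
  by_contra! hxt
  have h₁ : n * (x + 1) ≤ n * t := Nat.mul_le_mul_left _ hxt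
  have h₂ : R * x ≤ n * x := Nat.mul_le_mul_right _ ((Nat.le_pow two_pos).trans hn.le)
  nlinarith

lemma le_apply_last_of_mul_le_weight (hpos : ∀ i, 0 < r i)
    (hlt : ∀ i, i ≠ Fin.last k → r i < r (Fin.last k)) (hn : r (Fin.last k) ^ 2 < n)
    {z : Fin (k + 2) → ℕ} (hz : vlen (middle z) < r (Fin.last k)) {t : ℕ}
    (ht : n * t ≤ weight r z) : t ≤ z (Fin.last (k + 1)) := by
  have hmid := weight_le hpos hlt (middle z)
  rw [weight_eq_weight_middle_add] at ht
  exact le_of_mul_le_mul_add_sq hn (by nlinarith)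

lemma le_apply_zero_of_weight_add_mul_le (hn : r (Fin.last k) ^ 2 < n)
    {z : Fin (k + 2) → ℕ} (hz : vlen (middle z) < r (Fin.last k)) {t : ℕ}
    (ht : weight r z + n * t ≤ r (Fin.last k) * vlen z) : t ≤ z 0 := by
  rw [weight_eq_weight_middle_add, vlen_eq_vlen_middle_add] at ht
  exact le_of_mul_le_mul_add_sq hn (by nlinarith)

lemma exists_bideg_add_pad_eq (hpos : ∀ i, 0 < r i)
    (hlt : ∀ i, i ≠ Fin.last k → r i < r (Fin.last k)) (hn : r (Fin.last k) ^ 2 < n)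
    {y : Fin (k + 2) → ℕ} {s t : ℕ} (hs : weight r y + n * s ≤ r (Fin.last k) * vlen y)
    (ht : n * t ≤ weight r y) : ∃ x, bideg r (x + pad k s t) = bideg r y := by
  obtain ⟨z, hzy, hz⟩ := exists_bideg_eq_vlen_middle_lt_last hpos hlt y
  obtain ⟨hlen, hweight⟩ := bideg_eq_iff.1 hzy
  rw [← hweight] at hs ht
  rw [← hlen] at hs
  have hpad : pad k s t ≤ z := pad_le_iff.2 ⟨le_apply_zero_of_weight_add_mul_le hn hz hs,
    le_apply_last_of_mul_le_weight hpos hlt hn hz ht⟩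
  exact ⟨z - pad k s t, by rw [tsub_add_cancel_of_le hpad, hzy]⟩

lemma last_lt_vlen_of_mul_le_weight (hpos : ∀ i, 0 < r i)
    (hlt : ∀ i, i ≠ Fin.last k → r i < r (Fin.last k)) (hn : r (Fin.last k) ^ 2 < n)
    {x : Fin (k + 2) → ℕ} {l : ℕ} (hl : 0 < l) (h : n * l ≤ weight r x) :
    r (Fin.last k) < vlen x := by
  have hn_le : n ≤ weight r x := (Nat.le_mul_of_pos_right n hl).trans h
  refine Nat.lt_of_mul_lt_mul_left (a := r (Fin.last k)) ?_
  rw [← sq]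
  exact hn.trans_le (hn_le.trans (weight_le hpos hlt x))

lemma exists_meets_last_pos (hpos : ∀ i, 0 < r i)
    (hlt : ∀ i, i ≠ Fin.last k → r i < r (Fin.last k)) (hn : r (Fin.last k) ^ 2 < n)
    {z x : Fin (k + 2) → ℕ} (h : piM k n r z = piM k n r x) (hlen : vlen z < vlen x) :
    ∃ y, bideg r y = bideg r z ∧ Meets z y ∧ 0 < y (Fin.last (k + 1)) := by
  obtain ⟨l, hl⟩ := exists_add_of_le hlen.le
  have hweight := (piM_eq_iff_of_vlen_eq_add hl).1 h.symm
  have hl_pos : 0 < l := by omega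
  obtain hz | hz := lt_or_ge (vlen (middle z)) (r (Fin.last k))
  · have hlast : 0 < z (Fin.last (k + 1)) :=
      hl_pos.trans_le (le_apply_last_of_mul_le_weight hpos hlt hn hz (by omega))
    exact ⟨z, rfl, ⟨_, hlast, hlast⟩, hlast⟩
  · obtain ⟨y, hy, -, -, hlast, hmeets⟩ := exists_bideg_eq_vlen_middle_lt hpos hlt hz
    have hlong : r (Fin.last k) < vlen z :=
      last_lt_vlen_of_mul_le_weight hpos hlt hn hl_pos (by omega)
    exact ⟨y, hy, hmeets hlong, hlast⟩

lemma exists_meets_zero_pos (hpos : ∀ i, 0 < r i)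
    (hlt : ∀ i, i ≠ Fin.last k → r i < r (Fin.last k)) (hn : r (Fin.last k) ^ 2 < n)
    {z x : Fin (k + 2) → ℕ} (h : piM k n r z = piM k n r x) (hlen : vlen x < vlen z) :
    ∃ y, bideg r y = bideg r z ∧ Meets z y ∧ 0 < y 0 := by
  obtain ⟨l, hl⟩ := exists_add_of_le hlen.le
  have hweight := (piM_eq_iff_of_vlen_eq_add hl).1 h
  have hl_pos : 0 < l := by omega
  obtain hz | hz := lt_or_ge (vlen (middle z)) (r (Fin.last k))
  · have hx : weight r x ≤ r (Fin.last k) * vlen z :=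
      (weight_le hpos hlt x).trans (Nat.mul_le_mul_left _ hlen.le)
    have hzero : 0 < z 0 :=
      hl_pos.trans_le (le_apply_zero_of_weight_add_mul_le hn hz (hweight ▸ hx))
    exact ⟨z, rfl, ⟨_, hzero, hzero⟩, hzero⟩
  · obtain ⟨y, hy, -, hzero, -, hmeets⟩ := exists_bideg_eq_vlen_middle_lt hpos hlt hz
    have hlong : r (Fin.last k) < vlen x :=
      last_lt_vlen_of_mul_le_weight hpos hlt hn hl_pos (by omega)
    exact ⟨y, hy, hmeets (hlong.trans hlen), hzero⟩

end Reduction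

section Congruence

variable {m : ℕ} {ρ σ : Set ((Fin m → ℕ) × (Fin m → ℕ))} {π : (Fin m → ℕ) → ℕ}

lemma CongGen.mono (h : ρ ⊆ σ) {x y : Fin m → ℕ} (hxy : CongGen ρ x y) : CongGen σ x y := by
  induction hxy with
  | of hm => exact .of (h hm)
  | refl z => exact .refl z
  | symm _ ih => exact .symm ih
  | trans _ _ ih₁ ih₂ => exact .trans ih₁ ih₂
  | add u _ ih => exact .add u ih

lemma CongGen.rel_of_equivalence {E : (Fin m → ℕ) → (Fin m → ℕ) → Prop} (hE : Equivalence E)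
    (h : ∀ a b u, (a, b) ∈ ρ → E (a + u) (b + u)) {x y : Fin m → ℕ} (hxy : CongGen ρ x y) :
    E x y := by
  have htranslate : ∀ u, E (x + u) (y + u) := by
    induction hxy with
    | of hm => exact fun u => h _ _ u hm
    | refl z => exact fun u => hE.refl _
    | symm _ ih => exact fun u => hE.symm (ih u)
    | trans _ _ ih₁ ih₂ => exact fun u => hE.trans (ih₁ u) (ih₂ u)
    | add v _ ih => exact fun u => by simpa only [add_assoc] using ih (v + u)
  simpa using htranslate 0

lemma CongGen.map_eq (hπ : ∀ x y, π (x + y) = π x + π y) (hρ : ∀ p ∈ ρ, π p.1 = π p.2)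
    {x y : Fin m → ℕ} (hxy : CongGen ρ x y) : π x = π y :=
  hxy.rel_of_equivalence (E := fun x y => π x = π y) ⟨fun _ => rfl, Eq.symm, Eq.trans⟩
    fun a b u hab => by rw [hπ, hπ, hρ _ hab]

lemma CongGen.equivalence (ρ : Set ((Fin m → ℕ) × (Fin m → ℕ))) : Equivalence (CongGen ρ) :=
  ⟨.refl, .symm, .trans⟩

-- Only the translates `(a + u, b + u)` of relations that lie in the fiber of `x` matter.
lemma IsPres.rel_of_equivalence (hπ : ∀ x y, π (x + y) = π x + π y) (hρ : IsPres π ρ)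
    {E : (Fin m → ℕ) → (Fin m → ℕ) → Prop} (hE : Equivalence E) {x y : Fin m → ℕ}
    (h : ∀ a b u, (a, b) ∈ ρ → π (a + u) = π x → π (b + u) = π x → E (a + u) (b + u))
    (hxy : π x = π y) : E x y := by
  have key : π x = π y ∧ (π x = π x → E x y) :=
    ((hρ.2 x y).2 hxy).rel_of_equivalence (E := fun a b => π a = π b ∧ (π a = π x → E a b))
      ⟨fun _ => ⟨rfl, fun _ => hE.refl _⟩,
        fun hab => ⟨hab.1.symm, fun hb => hE.symm (hab.2 (hab.1.trans hb))⟩,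
        fun hab hbc => ⟨hab.1.trans hbc.1,
          fun ha => hE.trans (hab.2 ha) (hbc.2 (hab.1.symm.trans ha))⟩⟩
      fun a b u hab => by
        have hpi : π (a + u) = π (b + u) := by rw [hπ, hπ, hρ.1 _ hab]
        exact ⟨hpi, fun ha => h a b u hab ha (hpi.symm.trans ha)⟩
  exact key.2 rfl

/-- The homogeneous relations of `ρ`, those between factorizations of equal length. -/
def homPart (ρ : Set ((Fin m → ℕ) × (Fin m → ℕ))) : Set ((Fin m → ℕ) × (Fin m → ℕ)) :=
  {p ∈ ρ | vlen p.1 = vlen p.2}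

end Congruence

section Criterion

variable {k n : ℕ} {r : Fin (k + 1) → ℕ} {ρ : Set ((Fin (k + 2) → ℕ) × (Fin (k + 2) → ℕ))}

/-- A pair of factorizations of one element of `M_n`, of different lengths with the longer one
first, that cannot be connected through shorter steps: factorizations with the bidegrees of the
two members never meet, and no factorization of the same element has a length strictly in
between. -/
structure IsGap (n : ℕ) (r : Fin (k + 1) → ℕ)
    (p : (Fin (k + 2) → ℕ) × (Fin (k + 2) → ℕ)) : Prop where
  vlen_lt : vlen p.2 < vlen p.1
  piM_eq : piM k n r p.1 = piM k n r p.2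
  not_meets : ∀ a b, bideg r a = bideg r p.1 → bideg r b = bideg r p.2 → ¬ Meets a b
  vlen_notMem_Ioo : ∀ c, piM k n r c = piM k n r p.1 → vlen c ∉ Set.Ioo (vlen p.2) (vlen p.1)

/-- The homogeneous relations of `ρ` generate the kernel congruence of the homogenized monoid. -/
def GeneratesHom (r : Fin (k + 1) → ℕ)
    (ρ : Set ((Fin (k + 2) → ℕ) × (Fin (k + 2) → ℕ))) : Prop :=
  ∀ x y, bideg r x = bideg r y → CongGen (homPart ρ) x y

/-- Every gap of `M_n` is, up to bidegrees and orientation, a relation of `ρ`. -/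
def CoversGaps (n : ℕ) (r : Fin (k + 1) → ℕ)
    (ρ : Set ((Fin (k + 2) → ℕ) × (Fin (k + 2) → ℕ))) : Prop :=
  ∀ p, IsGap n r p →
    ∃ q, (q ∈ ρ ∨ q.swap ∈ ρ) ∧ bideg r q.1 = bideg r p.1 ∧ bideg r q.2 = bideg r p.2

lemma IsGap.congr {p q : (Fin (k + 2) → ℕ) × (Fin (k + 2) → ℕ)} (hp : IsGap n r p)
    (h₁ : bideg r q.1 = bideg r p.1) (h₂ : bideg r q.2 = bideg r p.2) : IsGap n r q where
  vlen_lt := by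
    rw [(bideg_eq_iff.1 h₁).1, (bideg_eq_iff.1 h₂).1]
    exact hp.vlen_lt
  piM_eq := by
    rw [piM_eq_of_bideg_eq n h₁, piM_eq_of_bideg_eq n h₂]
    exact hp.piM_eq
  not_meets a b ha hb := hp.not_meets a b (ha.trans h₁) (hb.trans h₂)
  vlen_notMem_Ioo c hc := by
    rw [(bideg_eq_iff.1 h₁).1, (bideg_eq_iff.1 h₂).1]
    exact hp.vlen_notMem_Ioo c (hc.trans (piM_eq_of_bideg_eq n h₁))

lemma GeneratesHom.congGen (hH : GeneratesHom r ρ) {x y : Fin (k + 2) → ℕ}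
    (h : bideg r x = bideg r y) : CongGen ρ x y :=
  (hH x y h).mono fun _ hp => hp.1

lemma CoversGaps.congGen_of_isGap (hC : CoversGaps n r ρ) (hH : GeneratesHom r ρ)
    {p : (Fin (k + 2) → ℕ) × (Fin (k + 2) → ℕ)} (hp : IsGap n r p) : CongGen ρ p.1 p.2 := by
  obtain ⟨q, hq, h₁, h₂⟩ := hC p hp
  have hcong : CongGen ρ q.1 q.2 := hq.elim .of fun h => .symm (.of h)
  exact .trans (hH.congGen h₁.symm) (.trans hcong (hH.congGen h₂))

-- Failing to be a gap, `(z, z')` can be joined either inside a smaller fiber, after removing a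
-- shared atom, or through an intermediate length.
theorem congGen_of_vlen_lt (hn : 0 < n) (hH : GeneratesHom r ρ) (hC : CoversGaps n r ρ)
    {z z' : Fin (k + 2) → ℕ} (hlen : vlen z' < vlen z) (h : piM k n r z = piM k n r z') :
    CongGen ρ z z' := by
  by_cases hgap : IsGap n r (z, z')
  · exact hC.congGen_of_isGap hH hgap
  by_cases hmeets : ∃ a b, bideg r a = bideg r z ∧ bideg r b = bideg r z' ∧ Meets a b
  · obtain ⟨a, b, ha, hb, hab⟩ := hmeets
    obtain ⟨x, y, i, rfl, rfl⟩ := hab.exists_eq_add_single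
    have hxz := piM_eq_of_bideg_eq n ha
    have hyz := piM_eq_of_bideg_eq n hb
    have hx_len := (bideg_eq_iff.1 ha).1
    have hy_len := (bideg_eq_iff.1 hb).1
    rw [piM_add] at hxz hyz
    rw [vlen_add] at hx_len hy_len
    have hxy : CongGen ρ x y := congGen_of_vlen_lt hn hH hC (by omega) (by omega)
    exact .trans (hH.congGen ha.symm) (.trans (.add _ hxy) (hH.congGen hb))
  · obtain ⟨c, hc, hc₁, hc₂⟩ : ∃ c, piM k n r c = piM k n r z ∧ vlen z' < vlen c ∧
        vlen c < vlen z := by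
      by_contra! hno
      exact hgap ⟨hlen, h, fun a b ha hb hab => hmeets ⟨a, b, ha, hb, hab⟩,
        fun c hc hmem => (hno c hc hmem.1).not_gt hmem.2⟩
    exact .trans (congGen_of_vlen_lt hn hH hC hc₂ hc.symm)
      (congGen_of_vlen_lt hn hH hC hc₁ (hc.trans h))
termination_by (piM k n r z, vlen z - vlen z')
decreasing_by
  · exact .left _ _ (piM_eq_of_bideg_eq n ha ▸ piM_lt_piM_add_single hn x i)
  · exact .right _ (Nat.sub_lt_sub_left hlen hc₁)
  · exact hc ▸ .right _ (Nat.sub_lt_sub_right hc₁.le hc₂)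

lemma isPres_of_coversGaps (hn : 0 < n) (hρ : ∀ p ∈ ρ, piM k n r p.1 = piM k n r p.2)
    (hH : GeneratesHom r ρ) (hC : CoversGaps n r ρ) : IsPres (piM k n r) ρ := by
  refine ⟨hρ, fun z z' => ⟨CongGen.map_eq (piM_add n r) hρ, fun h => ?_⟩⟩
  obtain hlen | hlen | hlen := lt_trichotomy (vlen z) (vlen z')
  · exact .symm (congGen_of_vlen_lt hn hH hC hlen h.symm)
  · exact hH.congGen (bideg_eq_of_piM_eq h hlen)
  · exact congGen_of_vlen_lt hn hH hC hlen h

lemma IsPres.congGen_homPart_of_vlen_eq (hρ : IsPres (piM k n r) ρ) {x y : Fin (k + 2) → ℕ}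
    (hx : ∀ z, piM k n r z = piM k n r x → vlen z = vlen x)
    (hxy : piM k n r x = piM k n r y) : CongGen (homPart ρ) x y := by
  refine hρ.rel_of_equivalence (piM_add n r) (CongGen.equivalence _) (fun a b u hab ha hb => ?_) hxy
  have hlen : vlen (a + u) = vlen (b + u) := (hx _ ha).trans (hx _ hb).symm
  rw [vlen_add, vlen_add] at hlen
  exact .add u (.of ⟨hab, Nat.add_right_cancel hlen⟩)

lemma exists_index_meets (hpos : ∀ i, 0 < r i)
    (hlt : ∀ i, i ≠ Fin.last k → r i < r (Fin.last k)) (hn : r (Fin.last k) ^ 2 < n)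
    {x z : Fin (k + 2) → ℕ} (hz : piM k n r z = piM k n r x) (hlen : vlen z ≠ vlen x) :
    ∃ j, ∀ x', bideg r x' = bideg r x → ∃ y, bideg r y = bideg r x' ∧ Meets x' y ∧ 0 < y j := by
  obtain h | h := lt_or_gt_of_ne hlen
  · exact ⟨0, fun x' hx' => exists_meets_zero_pos hpos hlt hn
      ((piM_eq_of_bideg_eq n hx').trans hz.symm) ((bideg_eq_iff.1 hx').1 ▸ h)⟩
  · exact ⟨Fin.last (k + 1), fun x' hx' => exists_meets_last_pos hpos hlt hn
      ((piM_eq_of_bideg_eq n hx').trans hz.symm) ((bideg_eq_iff.1 hx').1 ▸ h)⟩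

theorem IsPres.generatesHom (hpos : ∀ i, 0 < r i)
    (hlt : ∀ i, i ≠ Fin.last k → r i < r (Fin.last k)) (hn : r (Fin.last k) ^ 2 < n)
    (hρ : IsPres (piM k n r) ρ) : GeneratesHom r ρ := by
  intro x y hxy
  induction hL : vlen x using Nat.strong_induction_on generalizing x y with
  | _ L ih =>
    have of_meets {a b : Fin (k + 2) → ℕ} (ha : bideg r a = bideg r x)
        (hab : bideg r a = bideg r b) (h : Meets a b) : CongGen (homPart ρ) a b := by
      obtain ⟨a', b', i, rfl, rfl⟩ := h.exists_eq_add_single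
      have ha_len := (bideg_eq_iff.1 ha).1
      rw [vlen_add, vlen_single] at ha_len
      exact .add _ (ih _ (by omega) a' b' ((bideg_add_right _).1 hab) rfl)
    by_cases hconst : ∀ z, piM k n r z = piM k n r x → vlen z = vlen x
    · exact hρ.congGen_homPart_of_vlen_eq hconst (piM_eq_of_bideg_eq n hxy)
    · push Not at hconst
      obtain ⟨z, hz, hlen⟩ := hconst
      obtain ⟨j, hj⟩ := exists_index_meets hpos hlt hn hz hlen
      obtain ⟨x', hx', hxx', hx'j⟩ := hj x rfl
      obtain ⟨y', hy', hyy', hy'j⟩ := hj y hxy.symm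
      have hx'y' : bideg r x' = bideg r y' := hx'.trans (hxy.trans hy'.symm)
      exact .trans (of_meets rfl hx'.symm hxx') (.trans (of_meets hx' hx'y' ⟨j, hx'j, hy'j⟩)
        (.symm (of_meets hxy.symm hy'.symm hyy')))

-- A third length, longer or shorter than both, would let both members be rewritten to use `e_k`
-- or `e₀` respectively.
lemma IsGap.vlen_eq_or_eq (hpos : ∀ i, 0 < r i)
    (hlt : ∀ i, i ≠ Fin.last k → r i < r (Fin.last k)) (hn : r (Fin.last k) ^ 2 < n)
    {p : (Fin (k + 2) → ℕ) × (Fin (k + 2) → ℕ)} (hp : IsGap n r p) {x : Fin (k + 2) → ℕ}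
    (hx : piM k n r x = piM k n r p.1) : vlen x = vlen p.1 ∨ vlen x = vlen p.2 := by
  have hlen := hp.vlen_lt
  have hx' := hx.trans hp.piM_eq
  by_contra! hne
  obtain h | h | h : vlen p.1 < vlen x ∨ vlen x < vlen p.2 ∨
      vlen p.2 < vlen x ∧ vlen x < vlen p.1 := by omega
  · obtain ⟨a, ha, -, ha_last⟩ := exists_meets_last_pos hpos hlt hn hx.symm h
    obtain ⟨b, hb, -, hb_last⟩ := exists_meets_last_pos hpos hlt hn hx'.symm (hlen.trans h)
    exact hp.not_meets a b ha hb ⟨_, ha_last, hb_last⟩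
  · obtain ⟨a, ha, -, ha_zero⟩ := exists_meets_zero_pos hpos hlt hn hx.symm (h.trans hlen)
    obtain ⟨b, hb, -, hb_zero⟩ := exists_meets_zero_pos hpos hlt hn hx'.symm h
    exact hp.not_meets a b ha hb ⟨_, ha_zero, hb_zero⟩
  · exact hp.vlen_notMem_Ioo x hx h

lemma IsGap.eq_zero_of_add {p : (Fin (k + 2) → ℕ) × (Fin (k + 2) → ℕ)} (hp : IsGap n r p)
    {a b u : Fin (k + 2) → ℕ} (ha : bideg r (a + u) = bideg r p.1)
    (hb : bideg r (b + u) = bideg r p.2) : u = 0 := by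
  by_contra hu
  exact hp.not_meets _ _ ha hb (meets_add_right a b hu)

theorem IsPres.coversGaps (hpos : ∀ i, 0 < r i)
    (hlt : ∀ i, i ≠ Fin.last k → r i < r (Fin.last k)) (hn : r (Fin.last k) ^ 2 < n)
    (hρ : IsPres (piM k n r) ρ) : CoversGaps n r ρ := by
  intro p hp
  by_contra! hno
  have no_crossing {a b u : Fin (k + 2) → ℕ} (hab : (a, b) ∈ ρ ∨ (b, a) ∈ ρ)
      (ha : piM k n r (a + u) = piM k n r p.1) (hb : piM k n r (b + u) = piM k n r p.1)
      (ha_len : vlen (a + u) = vlen p.1) (hb_len : vlen (b + u) = vlen p.2) : False := by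
    have ha' := bideg_eq_of_piM_eq ha ha_len
    have hb' := bideg_eq_of_piM_eq (hb.trans hp.piM_eq) hb_len
    obtain rfl := hp.eq_zero_of_add ha' hb'
    rw [add_zero] at ha' hb'
    exact hno (a, b) hab ha' hb'
  have hiff : vlen p.1 = vlen p.1 ↔ vlen p.2 = vlen p.1 := by
    refine hρ.rel_of_equivalence (E := fun a b => vlen a = vlen p.1 ↔ vlen b = vlen p.1)
      (piM_add n r) ⟨fun _ => .rfl, Iff.symm, Iff.trans⟩ (fun a b u hab ha hb => ⟨?_, ?_⟩)
      hp.piM_eq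
    · exact fun h => (hp.vlen_eq_or_eq hpos hlt hn hb).resolve_right
        fun h' => no_crossing (.inl hab) ha hb h h'
    · exact fun h => (hp.vlen_eq_or_eq hpos hlt hn ha).resolve_right
        fun h' => no_crossing (.inr hab) hb ha h h'
  exact hp.vlen_lt.ne (hiff.1 rfl)

theorem isPres_iff (hpos : ∀ i, 0 < r i) (hlt : ∀ i, i ≠ Fin.last k → r i < r (Fin.last k))
    (hn : r (Fin.last k) ^ 2 < n) :
    IsPres (piM k n r) ρ ↔ (∀ p ∈ ρ, piM k n r p.1 = piM k n r p.2) ∧ GeneratesHom r ρ ∧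
      CoversGaps n r ρ :=
  ⟨fun h => ⟨h.1, h.generatesHom hpos hlt hn, h.coversGaps hpos hlt hn⟩,
    fun h => isPres_of_coversGaps (Nat.zero_lt_of_lt hn) h.1 h.2.1 h.2.2⟩

lemma IsMinPres.isGap_or_isGap_swap (hpos : ∀ i, 0 < r i)
    (hlt : ∀ i, i ≠ Fin.last k → r i < r (Fin.last k)) (hn : r (Fin.last k) ^ 2 < n)
    (hρ : IsMinPres (piM k n r) ρ) {p : (Fin (k + 2) → ℕ) × (Fin (k + 2) → ℕ)} (hp : p ∈ ρ)
    (hlen : vlen p.1 ≠ vlen p.2) : IsGap n r p ∨ IsGap n r p.swap := by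
  by_contra! hgap
  obtain ⟨hker, hH, hC⟩ := (isPres_iff hpos hlt hn).1 hρ.1
  have hhom : homPart (ρ \ {p}) = homPart ρ := by
    ext q
    refine ⟨fun hq => ⟨hq.1.1, hq.2⟩, fun hq => ⟨⟨hq.1, ?_⟩, hq.2⟩⟩
    rintro rfl
    exact hlen hq.2
  have hpres : IsPres (piM k n r) (ρ \ {p}) := by
    refine (isPres_iff hpos hlt hn).2 ⟨fun q hq => hker q hq.1, ?_, fun g hg => ?_⟩
    · rwa [GeneratesHom, hhom]
    · obtain ⟨q, hq, h₁, h₂⟩ := hC g hg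
      have hq_gap := hg.congr h₁ h₂
      refine ⟨q, hq.imp (fun h => ⟨h, ?_⟩) (fun h => ⟨h, ?_⟩), h₁, h₂⟩
      · rintro rfl
        exact hgap.1 hq_gap
      · rintro rfl
        exact hgap.2 hq_gap
  have hmem : p ∈ ρ \ {p} := (hρ.2 _ Set.sdiff_subset hpres).symm.subset hp
  exact hmem.2 rfl

end Criterion

section Phi

variable {k n : ℕ} {r : Fin (k + 1) → ℕ} {ρ : Set ((Fin (k + 2) → ℕ) × (Fin (k + 2) → ℕ))}

-- At most one of the two truncated differences is nonzero, so this covers all three cases.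
lemma Phi_eq (p : (Fin (k + 2) → ℕ) × (Fin (k + 2) → ℕ)) :
    Phi k p = (p.1 + pad k (vlen p.1 - vlen p.2) (vlen p.2 - vlen p.1),
      p.2 + pad k (vlen p.2 - vlen p.1) (vlen p.1 - vlen p.2)) := by
  have smul_single (i : Fin (k + 2)) (c : ℕ) :
      c • (Pi.single i 1 : Fin (k + 2) → ℕ) = Pi.single i c := by
    rw [← Pi.single_smul, smul_eq_mul, mul_one]
  simp only [Phi, pad, smul_single]
  split_ifs with h₁ h₂
  · simp [Nat.sub_eq_zero_of_le h₁.le]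
  · simp [Nat.sub_eq_zero_of_le h₂.le]
  · simp [le_antisymm (not_lt.1 h₁) (not_lt.1 h₂)]

lemma Phi_of_vlen_eq {p : (Fin (k + 2) → ℕ) × (Fin (k + 2) → ℕ)} (h : vlen p.1 = vlen p.2) :
    Phi k p = p := by
  simp [Phi, h]

lemma Phi_of_vlen_eq_add {a b : Fin (k + 2) → ℕ} {l : ℕ} (h : vlen a = vlen b + l) :
    Phi k (a, b) = (a + pad k l 0, b + pad k 0 l) := by
  simp [Phi_eq, h]

lemma Phi_swap (p : (Fin (k + 2) → ℕ) × (Fin (k + 2) → ℕ)) :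
    Phi k p.swap = (Phi k p).swap := by
  simp only [Phi_eq, Prod.fst_swap, Prod.snd_swap, Prod.swap_prod_mk]

lemma vlen_Phi_sub (p : (Fin (k + 2) → ℕ) × (Fin (k + 2) → ℕ)) :
    vlen (Phi k p).1 - vlen (Phi k p).2 = vlen p.1 - vlen p.2 ∧
      vlen (Phi k p).2 - vlen (Phi k p).1 = vlen p.2 - vlen p.1 := by
  simp only [Phi_eq, vlen_add, vlen_pad]
  omega

lemma Phi_injective (k : ℕ) : Function.Injective (Phi k) := by
  intro p q h
  have hp := vlen_Phi_sub p
  rw [h, (vlen_Phi_sub q).1, (vlen_Phi_sub q).2] at hp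
  rw [Phi_eq, Phi_eq, hp.1, hp.2, Prod.mk_inj, add_left_inj, add_left_inj] at h
  exact Prod.ext h.1 h.2

lemma bideg_Phi_eq_iff {p q : (Fin (k + 2) → ℕ) × (Fin (k + 2) → ℕ)} :
    bideg r (Phi k p).1 = bideg r (Phi k q).1 ∧ bideg r (Phi k p).2 = bideg r (Phi k q).2 ↔
      bideg r p.1 = bideg r q.1 ∧ bideg r p.2 = bideg r q.2 := by
  obtain ⟨hp₁, hp₂⟩ := vlen_Phi_sub p
  obtain ⟨hq₁, hq₂⟩ := vlen_Phi_sub q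
  constructor
  · intro h
    have hlen₁ := (bideg_eq_iff.1 h.1).1
    have hlen₂ := (bideg_eq_iff.1 h.2).1
    rw [hlen₁, hlen₂, hq₁] at hp₁
    rw [hlen₁, hlen₂, hq₂] at hp₂
    rwa [Phi_eq p, Phi_eq q, ← hp₁, ← hp₂, bideg_add_right, bideg_add_right] at h
  · intro h
    rwa [Phi_eq p, Phi_eq q, (bideg_eq_iff.1 h.1).1, (bideg_eq_iff.1 h.2).1, bideg_add_right,
      bideg_add_right]

lemma piM_add_pad_eq_iff {x y : Fin (k + 2) → ℕ} {d : ℕ} (h : vlen x = vlen y + d) (s t : ℕ) :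
    piM k (n + r (Fin.last k)) r (x + pad k (s + d) t) =
        piM k (n + r (Fin.last k)) r (y + pad k s (t + d)) ↔
      piM k n r x = piM k n r y := by
  have hlen : vlen (x + pad k (s + d) t) = vlen (y + pad k s (t + d)) + d := by
    simp only [vlen_add, vlen_pad]
    omega
  rw [piM_eq_iff_of_vlen_eq_add hlen, piM_eq_iff_of_vlen_eq_add h]
  simp only [weight_add, weight_pad, add_mul, mul_comm d]
  omega

lemma piM_Phi_eq_iff (p : (Fin (k + 2) → ℕ) × (Fin (k + 2) → ℕ)) :
    piM k (n + r (Fin.last k)) r (Phi k p).1 = piM k (n + r (Fin.last k)) r (Phi k p).2 ↔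
      piM k n r p.1 = piM k n r p.2 := by
  wlog h : vlen p.2 ≤ vlen p.1 generalizing p
  · have hswap := this p.swap (le_of_not_ge h)
    rwa [Phi_swap, Prod.fst_swap, Prod.snd_swap, Prod.fst_swap, Prod.snd_swap, eq_comm,
      eq_comm (a := piM k n r p.2)] at hswap
  obtain ⟨a, b⟩ := p
  obtain ⟨l, hl⟩ := exists_add_of_le h
  rw [Phi_of_vlen_eq_add hl]
  simpa only [zero_add] using piM_add_pad_eq_iff hl 0 0

lemma homPart_image_Phi (ρ : Set ((Fin (k + 2) → ℕ) × (Fin (k + 2) → ℕ))) :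
    homPart (Phi k '' ρ) = homPart ρ := by
  ext p
  constructor
  · rintro ⟨⟨q, hq, rfl⟩, hlen⟩
    have hq_len : vlen q.1 = vlen q.2 := by
      have := vlen_Phi_sub q
      omega
    rw [Phi_of_vlen_eq hq_len]
    exact ⟨hq, hq_len⟩
  · rintro ⟨hp, hlen⟩
    exact ⟨⟨p, hp, Phi_of_vlen_eq hlen⟩, hlen⟩

lemma IsGap.of_Phi {p : (Fin (k + 2) → ℕ) × (Fin (k + 2) → ℕ)}
    (hp : IsGap (n + r (Fin.last k)) r (Phi k p)) : IsGap n r p := by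
  have hker := (piM_Phi_eq_iff p).1 hp.piM_eq
  have hlt : vlen p.2 < vlen p.1 := by
    have := hp.vlen_lt
    have := vlen_Phi_sub p
    omega
  obtain ⟨a, b⟩ := p
  obtain ⟨l, hl⟩ := exists_add_of_le hlt.le
  rw [Phi_of_vlen_eq_add hl] at hp
  refine ⟨hlt, hker, fun a' b' ha hb hab => ?_, fun c hc ⟨hbc, hca⟩ => ?_⟩
  · exact hp.not_meets (a' + pad k l 0) (b' + pad k 0 l) ((bideg_add_right _).2 ha)
      ((bideg_add_right _).2 hb) (hab.add _ _)
  · obtain ⟨d, hd⟩ := exists_add_of_le hca.le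
    obtain ⟨s, hs⟩ := exists_add_of_le hbc.le
    dsimp only at hd hs hl hbc hca
    obtain rfl : l = s + d := by omega
    refine hp.vlen_notMem_Ioo (c + pad k s (0 + d)) ((piM_add_pad_eq_iff hd s 0).2 hc.symm).symm ?_
    simp only [Set.mem_Ioo, vlen_add, vlen_pad]
    omega

-- Conversely, factorizations over `M_{n + r_k}` with the bidegrees of the padded pair contain
-- enough copies of `e₀` and `e_k`, up to bidegree, to be brought back to `M_n`.
lemma IsGap.not_meets_Phi (hpos : ∀ i, 0 < r i)
    (hlt : ∀ i, i ≠ Fin.last k → r i < r (Fin.last k)) (hn : r (Fin.last k) ^ 2 < n)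
    {a b : Fin (k + 2) → ℕ} (hp : IsGap n r (a, b)) {l : ℕ} (hl : vlen a = vlen b + l)
    {a' b' : Fin (k + 2) → ℕ} (ha : bideg r a' = bideg r (a + pad k l 0))
    (hb : bideg r b' = bideg r (b + pad k 0 l)) : ¬ Meets a' b' := by
  intro hab
  obtain ⟨x, y, i, rfl, rfl⟩ := hab.exists_eq_add_single
  have hl_pos : 0 < l := by
    have := hp.vlen_lt
    dsimp only at this
    omega
  have hweight := (piM_eq_iff_of_vlen_eq_add hl).1 hp.piM_eq
  obtain ⟨hx_len, hx_weight⟩ := bideg_eq_iff.1 ha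
  obtain ⟨hy_len, hy_weight⟩ := bideg_eq_iff.1 hb
  rw [vlen_add, vlen_add, vlen_single, vlen_pad] at hx_len hy_len
  rw [weight_add, weight_add, weight_pad] at hx_weight hy_weight
  have hb_le : weight r b ≤ r (Fin.last k) * vlen b := weight_le hpos hlt b
  obtain ⟨x', hx'⟩ : ∃ x', bideg r (x' + pad k l 0) = bideg r x := by
    have hbx : r (Fin.last k) * vlen b ≤ r (Fin.last k) * vlen x :=
      Nat.mul_le_mul_left _ (by omega)
    exact exists_bideg_add_pad_eq hpos hlt hn (by omega) (by omega)
  obtain ⟨y', hy'⟩ : ∃ y', bideg r (y' + pad k 0 l) = bideg r y := by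
    have hny : n * l ≤ weight r y := by omega
    exact exists_bideg_add_pad_eq hpos hlt hn (by simpa using weight_le hpos hlt y) hny
  refine hp.not_meets (x' + Pi.single i 1) (y' + Pi.single i 1) ?_ ?_
    (meets_add_right _ _ (Pi.single_ne_zero_iff.2 one_ne_zero))
  · rw [← bideg_add_right (pad k l 0), ← ha, add_right_comm, bideg_add_right, hx']
  · rw [← bideg_add_right (pad k 0 l), ← hb, add_right_comm, bideg_add_right, hy']

lemma IsGap.vlen_notMem_Ioo_Phi (hpos : ∀ i, 0 < r i)
    (hlt : ∀ i, i ≠ Fin.last k → r i < r (Fin.last k)) (hn : r (Fin.last k) ^ 2 < n)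
    {a b : Fin (k + 2) → ℕ} (hp : IsGap n r (a, b)) {l : ℕ} (hl : vlen a = vlen b + l)
    {c : Fin (k + 2) → ℕ}
    (hc : piM k (n + r (Fin.last k)) r c = piM k (n + r (Fin.last k)) r (a + pad k l 0)) :
    vlen c ∉ Set.Ioo (vlen (b + pad k 0 l)) (vlen (a + pad k l 0)) := by
  rintro ⟨hbc, hca⟩
  obtain ⟨t, ht⟩ := exists_add_of_le hca.le
  have hweight := (piM_eq_iff_of_vlen_eq_add hl).1 hp.piM_eq
  have hc_weight := (piM_eq_iff_of_vlen_eq_add ht).1 hc.symm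
  rw [weight_add, weight_pad, zero_mul, add_zero] at hc_weight
  rw [vlen_add, vlen_pad] at hbc hca ht
  obtain ⟨s, rfl⟩ : ∃ s, l = s + t := ⟨l - t, by omega⟩
  obtain ⟨x, hx⟩ : ∃ x, bideg r (x + pad k s t) = bideg r c := by
    have hb_le : weight r b ≤ r (Fin.last k) * vlen b := weight_le hpos hlt b
    have hbc_le : r (Fin.last k) * (vlen b + t) ≤ r (Fin.last k) * vlen c :=
      Nat.mul_le_mul_left _ (by omega)
    exact exists_bideg_add_pad_eq hpos hlt hn (by nlinarith) (by nlinarith)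
  have hx_len := (bideg_eq_iff.1 hx).1
  rw [vlen_add, vlen_pad] at hx_len
  have hax : piM k n r a = piM k n r x := by
    rw [← piM_add_pad_eq_iff (d := t) (by omega) s 0, zero_add, ← hc]
    exact (piM_eq_of_bideg_eq _ hx).symm
  refine hp.vlen_notMem_Ioo x hax.symm ⟨?_, ?_⟩ <;> dsimp only <;> omega

lemma isGap_Phi_iff (hpos : ∀ i, 0 < r i) (hlt : ∀ i, i ≠ Fin.last k → r i < r (Fin.last k))
    (hn : r (Fin.last k) ^ 2 < n) {p : (Fin (k + 2) → ℕ) × (Fin (k + 2) → ℕ)} :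
    IsGap (n + r (Fin.last k)) r (Phi k p) ↔ IsGap n r p := by
  refine ⟨IsGap.of_Phi, fun hp => ?_⟩
  have hlen : vlen (Phi k p).2 < vlen (Phi k p).1 := by
    have := hp.vlen_lt
    have := vlen_Phi_sub p
    omega
  have hker := (piM_Phi_eq_iff p).2 hp.piM_eq
  obtain ⟨a, b⟩ := p
  obtain ⟨l, hl⟩ := exists_add_of_le hp.vlen_lt.le
  rw [Phi_of_vlen_eq_add hl] at hlen hker ⊢
  exact ⟨hlen, hker, fun _ _ => hp.not_meets_Phi hpos hlt hn hl,
    fun _ => hp.vlen_notMem_Ioo_Phi hpos hlt hn hl⟩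

lemma IsGap.vlen_middle_lt (hpos : ∀ i, 0 < r i)
    (hlt : ∀ i, i ≠ Fin.last k → r i < r (Fin.last k)) (hn : r (Fin.last k) ^ 2 < n)
    {p : (Fin (k + 2) → ℕ) × (Fin (k + 2) → ℕ)} (hp : IsGap n r p) :
    vlen (middle p.1) < r (Fin.last k) ∧ vlen (middle p.2) < r (Fin.last k) := by
  constructor <;> by_contra! h
  · obtain ⟨a, ha, -, -, ha_last, -⟩ := exists_bideg_eq_vlen_middle_lt hpos hlt h
    obtain ⟨b, hb, -, hb_last⟩ :=
      exists_meets_last_pos hpos hlt hn hp.piM_eq.symm hp.vlen_lt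
    exact hp.not_meets a b ha hb ⟨_, ha_last, hb_last⟩
  · obtain ⟨b, hb, -, hb_zero, -⟩ := exists_bideg_eq_vlen_middle_lt hpos hlt h
    obtain ⟨a, ha, -, ha_zero⟩ := exists_meets_zero_pos hpos hlt hn hp.piM_eq hp.vlen_lt
    exact hp.not_meets a b ha hb ⟨_, ha_zero, hb_zero⟩

lemma IsGap.mem_range_Phi (hpos : ∀ i, 0 < r i)
    (hlt : ∀ i, i ≠ Fin.last k → r i < r (Fin.last k)) (hn : r (Fin.last k) ^ 2 < n)
    {p : (Fin (k + 2) → ℕ) × (Fin (k + 2) → ℕ)} (hp : IsGap n r p) :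
    p ∈ Set.range (Phi k) := by
  obtain ⟨ha_mid, hb_mid⟩ := hp.vlen_middle_lt hpos hlt hn
  obtain ⟨a, b⟩ := p
  obtain ⟨l, hl⟩ := exists_add_of_le hp.vlen_lt.le
  have hweight := (piM_eq_iff_of_vlen_eq_add hl).1 hp.piM_eq
  have hb_le : weight r b ≤ r (Fin.last k) * vlen a :=
    (weight_le hpos hlt b).trans (Nat.mul_le_mul_left _ hp.vlen_lt.le)
  have ha_pad : pad k l 0 ≤ a := pad_le_iff.2
    ⟨le_apply_zero_of_weight_add_mul_le hn ha_mid (hweight ▸ hb_le), Nat.zero_le _⟩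
  have hb_pad : pad k 0 l ≤ b := pad_le_iff.2
    ⟨Nat.zero_le _, le_apply_last_of_mul_le_weight hpos hlt hn hb_mid (by omega)⟩
  obtain ⟨a', rfl⟩ := exists_add_of_le ha_pad
  obtain ⟨b', rfl⟩ := exists_add_of_le hb_pad
  have hl' : vlen a' = vlen b' + l := by
    simp only [vlen_add, vlen_pad] at hl
    omega
  refine ⟨(a', b'), ?_⟩
  rw [Phi_of_vlen_eq_add hl', add_comm a', add_comm b']

lemma swap_Phi_mem_image_iff {p : (Fin (k + 2) → ℕ) × (Fin (k + 2) → ℕ)} :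
    (Phi k p).swap ∈ Phi k '' ρ ↔ p.swap ∈ ρ := by
  rw [← Phi_swap, (Phi_injective k).mem_set_image]

lemma swap_mem_range_Phi_iff {p : (Fin (k + 2) → ℕ) × (Fin (k + 2) → ℕ)} :
    p.swap ∈ Set.range (Phi k) ↔ p ∈ Set.range (Phi k) := by
  suffices h : ∀ q ∈ Set.range (Phi k), q.swap ∈ Set.range (Phi k) from ⟨h p.swap, h p⟩
  rintro _ ⟨q, rfl⟩
  exact ⟨q.swap, Phi_swap q⟩

lemma coversGaps_image_Phi_iff (hpos : ∀ i, 0 < r i)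
    (hlt : ∀ i, i ≠ Fin.last k → r i < r (Fin.last k)) (hn : r (Fin.last k) ^ 2 < n) :
    CoversGaps (n + r (Fin.last k)) r (Phi k '' ρ) ↔ CoversGaps n r ρ := by
  constructor
  · intro h p hp
    obtain ⟨q, hq, hbideg⟩ := h _ ((isGap_Phi_iff hpos hlt hn).2 hp)
    obtain ⟨q, rfl⟩ : q ∈ Set.range (Phi k) := hq.elim (fun hq => Set.image_subset_range _ _ hq)
      fun hq => swap_mem_range_Phi_iff.1 (Set.image_subset_range _ _ hq)
    rw [(Phi_injective k).mem_set_image, swap_Phi_mem_image_iff] at hq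
    exact ⟨q, hq, bideg_Phi_eq_iff.1 hbideg⟩
  · intro h p hp
    obtain ⟨p, rfl⟩ := hp.mem_range_Phi hpos hlt (Nat.lt_add_right _ hn)
    obtain ⟨q, hq, hbideg⟩ := h p hp.of_Phi
    refine ⟨Phi k q, ?_, bideg_Phi_eq_iff.2 hbideg⟩
    rwa [(Phi_injective k).mem_set_image, swap_Phi_mem_image_iff]

theorem isPres_image_Phi_iff (hpos : ∀ i, 0 < r i)
    (hlt : ∀ i, i ≠ Fin.last k → r i < r (Fin.last k)) (hn : r (Fin.last k) ^ 2 < n) :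
    IsPres (piM k (n + r (Fin.last k)) r) (Phi k '' ρ) ↔ IsPres (piM k n r) ρ := by
  rw [isPres_iff hpos hlt hn, isPres_iff hpos hlt (Nat.lt_add_right _ hn),
    coversGaps_image_Phi_iff hpos hlt hn, GeneratesHom, GeneratesHom, homPart_image_Phi]
  simp only [Set.forall_mem_image, piM_Phi_eq_iff]

lemma IsMinPres.subset_range_Phi (hpos : ∀ i, 0 < r i)
    (hlt : ∀ i, i ≠ Fin.last k → r i < r (Fin.last k)) (hn : r (Fin.last k) ^ 2 < n)
    (hρ : IsMinPres (piM k n r) ρ) : ρ ⊆ Set.range (Phi k) := by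
  intro p hp
  by_cases hlen : vlen p.1 = vlen p.2
  · exact ⟨p, Phi_of_vlen_eq hlen⟩
  obtain h | h := hρ.isGap_or_isGap_swap hpos hlt hn hp hlen
  · exact h.mem_range_Phi hpos hlt hn
  · exact swap_mem_range_Phi_iff.1 (h.mem_range_Phi hpos hlt hn)

end Phi

lemma isMinPres_image_iff {m m' : ℕ} {π : (Fin m → ℕ) → ℕ} {π' : (Fin m' → ℕ) → ℕ}
    {F : (Fin m → ℕ) × (Fin m → ℕ) → (Fin m' → ℕ) × (Fin m' → ℕ)} (hF : Function.Injective F)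
    (h : ∀ ρ, IsPres π' (F '' ρ) ↔ IsPres π ρ) {ρ : Set ((Fin m → ℕ) × (Fin m → ℕ))} :
    IsMinPres π' (F '' ρ) ↔ IsMinPres π ρ := by
  simp only [IsMinPres, Set.forall_subset_image_iff, h, hF.image_injective.eq_iff]

theorem stmt10_general (k n : ℕ) (r : Fin (k + 1) → ℕ) (hpos : ∀ i, 0 < r i)
    (hlt : ∀ i, i ≠ Fin.last k → r i < r (Fin.last k)) (hn : r (Fin.last k) ^ 2 < n) :
    Set.BijOn (fun ρ => Phi k '' ρ) {ρ | IsMinPres (piM k n r) ρ}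
      {ρ | IsMinPres (piM k (n + r (Fin.last k)) r) ρ} := by
  have hiff (ρ : Set _) :
      IsMinPres (piM k (n + r (Fin.last k)) r) (Phi k '' ρ) ↔ IsMinPres (piM k n r) ρ :=
    isMinPres_image_iff (Phi_injective k) fun _ => isPres_image_Phi_iff hpos hlt hn
  refine ⟨fun ρ hρ => (hiff ρ).2 hρ, (Phi_injective k).image_injective.injOn, fun σ hσ => ?_⟩
  obtain ⟨ρ, rfl⟩ := Set.subset_range_iff_exists_image_eq.1
    (IsMinPres.subset_range_Phi hpos hlt (Nat.lt_add_right _ hn) hσ)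
  exact ⟨ρ, (hiff ρ).1 hσ, rfl⟩

/-- For `n > r_k²` with `M_n` primitive and minimally generated, `Φ_n` carries minimal
presentations of `M_n` to minimal presentations of `M_{n+r_k}`, inducing a bijection
between the two sets of minimal presentations. -/
theorem stmt10 (k n : ℕ) (r : Fin (k + 1) → ℕ) (hmono : StrictMono r) (hpos : 0 < r 0)
    (hn : r (Fin.last k) ^ 2 < n) (hprim : Primitive k n r)
    (hmingen : ∀ j : Fin (k + 2), ∀ z : Fin (k + 2) → ℕ,
      piM k n r z = piM k n r (Pi.single j 1) → z = Pi.single j 1) :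
    (∀ ρ, IsMinPres (piM k n r) ρ →
        IsMinPres (piM k (n + r (Fin.last k)) r) (Phi k '' ρ)) ∧
      Set.BijOn (fun ρ => Phi k '' ρ)
        {ρ | IsMinPres (piM k n r) ρ}
        {ρ | IsMinPres (piM k (n + r (Fin.last k)) r) ρ} := by
  have h := stmt10_general k n r (fun i => hpos.trans_le (hmono.monotone (Fin.zero_le i)))
    (fun i hi => hmono (Fin.lt_last_iff_ne_last.2 hi)) hn
  exact ⟨fun _ hρ => h.mapsTo hρ, h⟩
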